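/- arXiv:1805.11448 — 2 statements merged into one kernel-verified Lean document; each statement's English description precedes it below -/
import Mathlib

section
/- Let 𝕜 be a field and R = 𝕜[y]. Let σ be the endomorphism of R with σ(r) = r for all r ∈ 𝕜 and σ(y) = p(y), where p(y) is a polynomial in y of degree greater than 1, and let δ be a σ-derivation with δ(a) = 0 for all a ∈ 𝕜. If a is an element of S = R[x;σ,δ] with a ∉ 𝕜, then C_S(a) is a free 𝕜[a]-module of finite rank. -/
open Finsupp

noncomputable section

variable {R S : Type*}

/-- `S` is the Ore extension `R[x; σ, δ]` of `R` (embedded in `S` via `ι`):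
`δ` is a `σ`-derivation of `R`, `S` is a free left `R`-module with basis `1, x, x², …`,
and `x * r = σ(r) * x + δ(r)` for all `r ∈ R`. -/
structure IsOreExtension [Ring R] [Ring S] (ι : R →+* S) (σ : R →+* R) (δ : R → R)
    (x : S) : Prop where
  deriv_add : ∀ a b : R, δ (a + b) = δ a + δ b
  deriv_mul : ∀ a b : R, δ (a * b) = σ a * δ b + δ a * b
  repr_uniq : ∀ s : S, ∃! c : ℕ →₀ R, s = c.sum fun i r => ι r * x ^ i
  comm_rule : ∀ r : R, x * ι r = ι (σ r) * x + ι (δ r)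

/-- The (unique) coefficient family of `s` with respect to the basis `1, x, x², …`. -/
def oreCoeff [Ring R] [Ring S] {ι : R →+* S} {σ : R →+* R} {δ : R → R} {x : S}
    (h : IsOreExtension ι σ δ x) (s : S) : ℕ →₀ R :=
  (h.repr_uniq s).exists.choose

/-- The degree (in `x`) of an element of the Ore extension. -/
def oreDeg [Ring R] [Ring S] {ι : R →+* S} {σ : R →+* R} {δ : R → R} {x : S}
    (h : IsOreExtension ι σ δ x) (s : S) : ℕ :=
  (oreCoeff h s).support.sup id

/-- The leading coefficient (in `x`) of an element of the Ore extension. -/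
def oreLeadCoeff [Ring R] [Ring S] {ι : R →+* S} {σ : R →+* R} {δ : R → R} {x : S}
    (h : IsOreExtension ι σ δ x) (s : S) : R :=
  oreCoeff h s (oreDeg h s)

/-- The centralizer of `a`: all elements commuting with `a`. -/
def centralizerOf [Ring S] (a : S) : Set S := {b | b * a = a * b}

/-- The set of "polynomials in `P` with coefficients in `F`", i.e. all finite sums
`Σ_j ι(b_j) * P^j` with every `b_j ∈ F`. -/
def polysIn [Ring R] [Ring S] (ι : R →+* S) (F : Set R) (P : S) : Set S :=
  {s | ∃ d : ℕ →₀ R, (∀ j, d j ∈ F) ∧ s = d.sum fun j b => ι b * P ^ j}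

/-- The subset `M` of `S` is a free module of rank at most `nbound` over the coefficient
subring `coeffs ⊆ S` (acting by left multiplication). -/
def IsFreeModuleOfRankAtMost [Ring S] (coeffs : Set S) (M : Set S) (nbound : ℕ) : Prop :=
  ∃ m ≤ nbound, ∃ u : Fin m → S, (∀ i, u i ∈ M) ∧
    ∀ e ∈ M, ∃! c : Fin m → S, (∀ i, c i ∈ coeffs) ∧ e = ∑ i, c i * u i

/-- The subset `M` of `S` is a free module of finite rank over the coefficient
subring `coeffs ⊆ S` (acting by left multiplication). -/
def IsFreeModuleOfFiniteRank [Ring S] (coeffs : Set S) (M : Set S) : Prop :=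
  ∃ m : ℕ, ∃ u : Fin m → S, (∀ i, u i ∈ M) ∧
    ∀ e ∈ M, ∃! c : Fin m → S, (∀ i, c i ∈ coeffs) ∧ e = ∑ i, c i * u i

/-- A subset `F` of a ring is a field (with the induced operations): it is nontrivial and
every nonzero element of `F` has a multiplicative inverse lying in `F`. -/
def IsFieldSubset [Ring R] (F : Set R) : Prop :=
  (0 : R) ≠ 1 ∧ ∀ a ∈ F, a ≠ 0 → ∃ b ∈ F, a * b = 1

/-!
Coefficients with respect to `1, x, x², …` identify `S` with `R[X]` additively. As `σ` is
injective, the degree in `x` is additive on products, and leading coefficients are multiplied by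
the twisted rule `lc (s * t) = lc s * σ ^ deg s (lc t)`.

Let `n` be the degree of `a` and `α` its leading coefficient. If `b` commutes with `a` and has
degree `m` and leading coefficient `β`, then `β * σ ^ m α = α * σ ^ n β`. When `n > 0`, this
equation is `𝕜`-linear in `β` for fixed `m`, and comparing degrees in `y` shows that all its nonzero
solutions have the same degree; so they are all proportional. When `n = 0`, it forces `m = 0`, so
that the centralizer is `𝕜[y]`. In both cases the centralizer carries an additive degree for which
any two elements of equal degree agree, up to a scalar, modulo lower degree. Choosing an element of
least degree in each residue class modulo `deg a` that occurs, one finds finitely many generators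
over `𝕜[a]`. Since `a` is transcendental over `𝕜` and the centralizer is a domain, it is a finitely
generated torsion-free module over a principal ideal domain, hence free.
-/

section OneDimDegree

open Polynomial Module

theorem exists_finite_subset_forall_exists_add_mul (D : Set ℕ) {n : ℕ} (hn : 0 < n) :
    ∃ F ⊆ D, F.Finite ∧ ∀ k ∈ D, ∃ l ∈ F, ∃ q, k = l + n * q := by
  refine ⟨{l ∈ D | ∀ k ∈ D, k ≡ l [MOD n] → l ≤ k}, Set.sep_subset _ _, ?_, fun k hk => ?_⟩
  · refine Set.Finite.of_injOn (f := (· % n)) (t := Set.Iio n) (fun l _ => Nat.mod_lt l hn) ?_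
      (Set.finite_Iio n)
    rintro l ⟨hl, hl_min⟩ l' ⟨hl', hl'_min⟩ hll'
    exact (hl_min l' hl' hll'.symm).antisymm (hl'_min l hl hll')
  · obtain ⟨l, ⟨hl, hlk⟩, hl_min⟩ :=
      wellFounded_lt.has_min {l ∈ D | l ≡ k [MOD n]} ⟨k, hk, rfl⟩
    have hl_le : ∀ j ∈ D, j ≡ l [MOD n] → l ≤ j := fun j hj hjl =>
      not_lt.1 (hl_min j ⟨hj, hjl.trans hlk⟩)
    have hle := hl_le k hk hlk.symm
    obtain ⟨q, hq⟩ := (Nat.modEq_iff_dvd' hle).1 hlk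
    exact ⟨l, ⟨hl, hl_le⟩, q, by omega⟩

/-- A degree function on a `K`-algebra which is additive on products and whose graded pieces are at
most one-dimensional over `K`: elements of equal degree agree, up to a scalar, modulo lower degree.
The value `⊥` plays the role of `-∞`. -/
structure IsOneDimDegree (K : Type*) {A : Type*} [Field K] [Ring A] [Algebra K A]
    (d : A → WithBot ℕ) : Prop where
  eq_bot_iff : ∀ b, d b = ⊥ ↔ b = 0
  map_mul : ∀ b c, d (b * c) = d b + d c
  exists_sub_smul_lt : ∀ b c, b ≠ 0 → c ≠ 0 → d b = d c → ∃ k : K, d (b - k • c) < d b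

namespace IsOneDimDegree

variable {K A : Type*} [Field K] [Ring A] [Algebra K A] {d : A → WithBot ℕ} {a : A}

theorem noZeroDivisors (hd : IsOneDimDegree K d) : NoZeroDivisors A where
  eq_zero_or_eq_zero_of_mul_eq_zero {b c} hbc := by
    rwa [← hd.eq_bot_iff, hd.map_mul, WithBot.add_eq_bot, hd.eq_bot_iff, hd.eq_bot_iff] at hbc

theorem ne_zero_of_pos (hd : IsOneDimDegree K d) (ha : 0 < d a) : a ≠ 0 := by
  rintro rfl
  simp [(hd.eq_bot_iff 0).2 rfl] at ha

theorem ne_bot (hd : IsOneDimDegree K d) {b : A} (hb : b ≠ 0) : d b ≠ ⊥ :=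
  (hd.eq_bot_iff b).not.2 hb

theorem exists_eq_natCast (hd : IsOneDimDegree K d) {b : A} (hb : b ≠ 0) :
    ∃ k : ℕ, d b = (k : WithBot ℕ) := by
  obtain ⟨k, hk⟩ := WithBot.ne_bot_iff_exists.1 (hd.ne_bot hb)
  exact ⟨k, hk.symm⟩

theorem map_one [Nontrivial A] (hd : IsOneDimDegree K d) : d 1 = 0 := by
  have hadd : d 1 + d 1 = 0 + d 1 := by rw [← hd.map_mul, mul_one, zero_add]
  exact (WithBot.add_right_inj (hd.ne_bot one_ne_zero)).1 hadd

theorem map_pow [Nontrivial A] (hd : IsOneDimDegree K d) (b : A) (q : ℕ) :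
    d (b ^ q) = q • d b := by
  induction q with
  | zero => simp [hd.map_one]
  | succ q ih => rw [pow_succ, hd.map_mul, ih, succ_nsmul]

theorem not_isUnit [Nontrivial A] (hd : IsOneDimDegree K d) (ha : 0 < d a) : ¬IsUnit a := by
  rintro ⟨u, rfl⟩
  have hadd : d u + d ↑u⁻¹ = 0 := by rw [← hd.map_mul, u.mul_inv, hd.map_one]
  obtain ⟨k, hk⟩ := hd.exists_eq_natCast u⁻¹.ne_zero
  have hinv : 0 ≤ d ↑u⁻¹ := hk ▸ Nat.cast_nonneg k
  exact (add_pos_of_pos_of_nonneg ha hinv).ne' hadd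

theorem transcendental [Nontrivial A] (hd : IsOneDimDegree K d) (ha : 0 < d a) :
    Transcendental K a := fun halg => by
  have := hd.noZeroDivisors
  exact hd.not_isUnit ha <| IsArtinianRing.isUnit_of_isIntegral_of_nonZeroDivisor
    halg.isIntegral (mem_nonZeroDivisors_of_ne_zero (hd.ne_zero_of_pos ha))

theorem isTorsionFree_aeval (hd : IsOneDimDegree K d) (ha : 0 < d a) :
    IsTorsionFree K[X] (AEval K A a) := by
  have := nontrivial_of_ne a 0 (hd.ne_zero_of_pos ha)
  have := hd.noZeroDivisors
  refine .of_smul_eq_zero fun f b hfb => ?_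
  have hmul : aeval a f * (AEval.of K A a).symm b = 0 := by
    rw [← smul_eq_mul, ← AEval.of_symm_smul, hfb, map_zero]
  refine (mul_eq_zero.1 hmul).imp (fun hf => ?_) (fun hb => by simpa using hb)
  exact (transcendental_iff.1 (hd.transcendental ha)) f hf

theorem finite_aeval (hd : IsOneDimDegree K d) (ha : 0 < d a) :
    Module.Finite K[X] (AEval K A a) := by
  have := nontrivial_of_ne a 0 (hd.ne_zero_of_pos ha)
  obtain ⟨n, hn⟩ := hd.exists_eq_natCast (hd.ne_zero_of_pos ha)
  have hn_pos : 0 < n := by rwa [hn, Nat.cast_pos'] at ha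
  obtain ⟨F, hF, hF_fin, hF_gen⟩ :=
    exists_finite_subset_forall_exists_add_mul {k : ℕ | ∃ b, d b = (k : WithBot ℕ)} hn_pos
  choose! w hw using fun l (hl : l ∈ F) => hF hl
  let M := Submodule.span K[X] ((fun k => AEval.of K A a (w k)) '' F)
  suffices hM : ∀ b, AEval.of K A a b ∈ M from
    ⟨Submodule.fg_def.2 ⟨_, hF_fin.image _, eq_top_iff.2 fun b _ => hM ((AEval.of K A a).symm b)⟩⟩
  intro b
  induction hb : d b using WellFoundedLT.induction generalizing b with
  | ind e ih =>
    subst hb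
    by_cases hb0 : b = 0
    · simp [hb0]
    obtain ⟨k, hk⟩ := hd.exists_eq_natCast hb0
    obtain ⟨l, hl, q, rfl⟩ := hF_gen k ⟨b, hk⟩
    have hdeg : d b = d (a ^ q * w l) := by
      rw [hd.map_mul, hd.map_pow, hw l hl, hn, hk, nsmul_eq_mul]
      norm_cast
      rw [mul_comm, add_comm]
    have hne : a ^ q * w l ≠ 0 := by
      rw [Ne, ← hd.eq_bot_iff, ← hdeg]
      exact hd.ne_bot hb0
    obtain ⟨c, hc⟩ := hd.exists_sub_smul_lt b _ hb0 hne hdeg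
    have hmem : AEval.of K A a (c • (a ^ q * w l)) ∈ M := by
      rw [map_smul, ← AEval.C_smul, ← smul_eq_mul, ← AEval.X_pow_smul_of]
      exact M.smul_mem _ (M.smul_mem _ (Submodule.subset_span ⟨l, hl, rfl⟩))
    simpa using M.add_mem (ih _ hc _ rfl) hmem

theorem free_aeval (hd : IsOneDimDegree K d) (ha : 0 < d a) : Module.Free K[X] (AEval K A a) :=
  have := hd.finite_aeval ha
  have := hd.isTorsionFree_aeval ha
  inferInstance

end IsOneDimDegree

end OneDimDegree

section Centralizer

open Polynomial Module

variable {K : Type*} [CommRing K] [Ring S] [Algebra K S] {ι : K[X] →+* S}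

theorem polysIn_range_C_eq_range_aeval (hι : ∀ k : K, algebraMap K S k = ι (C k)) (a : S) :
    polysIn ι {r : K[X] | ∃ c : K, r = C c} a = Set.range fun f : K[X] => aeval a f := by
  ext s
  constructor
  · rintro ⟨e, he, rfl⟩
    choose k hk using he
    refine ⟨∑ j ∈ e.support, monomial j (k j), ?_⟩
    simp [Finsupp.sum, aeval_monomial, hι, hk]
  · rintro ⟨f, rfl⟩
    refine ⟨Finsupp.onFinset f.support (fun j => C (f.coeff j)) (by simp), fun j => ⟨_, rfl⟩, ?_⟩
    rw [Finsupp.onFinset_sum _ (by simp)]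
    simp [aeval_def, eval₂_eq_sum, Polynomial.sum, hι]

theorem mem_centralizer_singleton_iff {a b : S} :
    b ∈ Subalgebra.centralizer K {a} ↔ b ∈ centralizerOf a := by
  simp [Subalgebra.mem_centralizer_iff, centralizerOf, eq_comm]

variable (K) in
/-- The element `a` regarded as an element of its own centralizer, so that the centralizer becomes
a `K[X]`-module with `X` acting as `a`. -/
def selfCentralizer (a : S) : Subalgebra.centralizer K {a} :=
  ⟨a, mem_centralizer_singleton_iff.2 rfl⟩

theorem isFreeModuleOfFiniteRank_centralizerOf [Nontrivial K]
    (hι : ∀ k : K, algebraMap K S k = ι (C k)) (a : S)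
    [Module.Free K[X] (AEval K (Subalgebra.centralizer K {a}) (selfCentralizer K a))]
    [Module.Finite K[X] (AEval K (Subalgebra.centralizer K {a}) (selfCentralizer K a))] :
    IsFreeModuleOfFiniteRank (polysIn ι {r : K[X] | ∃ c : K, r = C c} a) (centralizerOf a) := by
  let φ := AEval.of K (Subalgebra.centralizer K {a}) (selfCentralizer K a)
  let v := Module.finBasis K[X]
    (AEval K (Subalgebra.centralizer K {a}) (selfCentralizer K a))
  have hsmul : ∀ f m, (φ.symm (f • m) : S) = aeval a f * (φ.symm m : S) := fun f m => by
    rw [AEval.of_symm_smul, smul_eq_mul, Subalgebra.coe_mul]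
    congr 1
    exact (aeval_algHom_apply (Subalgebra.val _) (selfCentralizer K a) f).symm
  have hsum : ∀ c : Fin _ → K[X],
      (φ.symm (∑ i, c i • v i) : S) = ∑ i, aeval a (c i) * (φ.symm (v i) : S) := fun c => by
    simp only [map_sum, AddSubmonoidClass.coe_finsetSum, hsmul]
  rw [polysIn_range_C_eq_range_aeval hι]
  refine ⟨_, fun i => φ.symm (v i), fun i => mem_centralizer_singleton_iff.1 (φ.symm (v i)).2,
    fun e he => ?_⟩
  let e' : Subalgebra.centralizer K {a} := ⟨e, mem_centralizer_singleton_iff.2 he⟩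
  refine ⟨fun i => aeval a (v.repr (φ e') i), ⟨fun i => ⟨_, rfl⟩, ?_⟩, ?_⟩
  · beta_reduce
    rw [← hsum, v.sum_repr, LinearEquiv.symm_apply_apply]
  · rintro c ⟨hc, hec⟩
    choose g hg using hc
    have hrepr : φ e' = ∑ i, g i • v i := by
      rw [← LinearEquiv.eq_symm_apply, Subtype.ext_iff, hsum]
      simp only [hg, ← hec, e']
    funext i
    rw [hrepr, v.repr_sum_self, ← hg]

end Centralizer

namespace IsOreExtension

open Polynomial

section Ring

variable [Ring R] [Ring S] {ι : R →+* S} {σ : R →+* R} {δ : R → R} {x : S}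

theorem bijective_eval₂ (h : IsOreExtension ι σ δ x) :
    Function.Bijective (eval₂AddMonoidHom ι x) := by
  have hsum : ∀ q : R[X], eval₂AddMonoidHom ι x q =
      q.toFinsupp.coeff.sum fun i r => ι r * x ^ i := fun q => eval₂_eq_sum
  constructor
  · intro q q' hqq'
    exact toFinsupp_injective <| AddMonoidAlgebra.coeff_injective <|
      (h.repr_uniq _).unique (hsum q) (hqq'.trans (hsum q'))
  · intro s
    obtain ⟨c, hc, -⟩ := h.repr_uniq s
    exact ⟨⟨⟨c⟩⟩, (hsum _).trans hc.symm⟩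

/-- The coefficients of `s` with respect to `1, x, x², …`, recorded as a polynomial. This gives
access to Mathlib's degrees and leading coefficients; the products of `S` and of `R[X]` are
unrelated. -/
def toPoly (h : IsOreExtension ι σ δ x) : S ≃+ R[X] :=
  (AddEquiv.ofBijective _ h.bijective_eval₂).symm

variable (h : IsOreExtension ι σ δ x)

theorem toPoly_map_mul_pow (r : R) (i : ℕ) : h.toPoly (ι r * x ^ i) = monomial i r := by
  rw [toPoly, AddEquiv.symm_apply_eq]
  simp [eval₂_monomial]

theorem toPoly_map (r : R) : h.toPoly (ι r) = C r := by
  simpa using h.toPoly_map_mul_pow r 0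

include h in
theorem induction_on {motive : S → Prop} (s : S)
    (add : ∀ s t, motive s → motive t → motive (s + t))
    (map_mul_pow : ∀ r i, motive (ι r * x ^ i)) : motive s := by
  rw [← h.toPoly.symm_apply_apply s]
  induction h.toPoly s using Polynomial.induction_on' with
  | add p q hp hq => simpa using add _ _ hp hq
  | monomial i r => simpa [← h.toPoly_map_mul_pow] using map_mul_pow r i

theorem toPoly_map_mul (r : R) (s : S) : h.toPoly (ι r * s) = C r * h.toPoly s := by
  induction s using h.induction_on with
  | add s t hs ht => rw [mul_add, map_add, hs, ht, map_add, mul_add]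
  | map_mul_pow r' i =>
    rw [← mul_assoc, ← map_mul, toPoly_map_mul_pow, toPoly_map_mul_pow, C_mul_monomial]

theorem eq_map_of_natDegree_eq_zero {s : S} (hs : (h.toPoly s).natDegree = 0) :
    s = ι ((h.toPoly s).coeff 0) := by
  apply h.toPoly.injective
  rw [toPoly_map, ← eq_C_of_natDegree_eq_zero hs]

include h in
theorem deriv_zero : δ 0 = 0 := by
  simpa using h.deriv_add 0 0

theorem coeff_toPoly_x_mul (s : S) (i : ℕ) :
    (h.toPoly (x * s)).coeff (i + 1) =
      σ ((h.toPoly s).coeff i) + δ ((h.toPoly s).coeff (i + 1)) := by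
  induction s using h.induction_on with
  | add s t hs ht =>
    simp only [mul_add, map_add, coeff_add, hs, ht, h.deriv_add]
    abel
  | map_mul_pow r j =>
    have hx : x * (ι r * x ^ j) = ι (σ r) * x ^ (j + 1) + ι (δ r) * x ^ j := by
      rw [← mul_assoc, h.comm_rule, add_mul, mul_assoc, pow_succ']
    simp only [hx, map_add, toPoly_map_mul_pow, coeff_add, coeff_monomial, add_left_inj]
    split_ifs <;> simp [h.deriv_zero]

theorem natDegree_toPoly_pow_mul_le (i : ℕ) (s : S) :
    (h.toPoly (x ^ i * s)).natDegree ≤ i + (h.toPoly s).natDegree := by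
  induction i with
  | zero => simp
  | succ i ih =>
    rw [natDegree_le_iff_coeff_eq_zero]
    intro N hN
    obtain ⟨N, rfl⟩ := Nat.exists_eq_succ_of_ne_zero (Nat.ne_zero_of_lt hN)
    rw [pow_succ', mul_assoc, Nat.succ_eq_add_one, coeff_toPoly_x_mul,
      coeff_eq_zero_of_natDegree_lt (by omega), coeff_eq_zero_of_natDegree_lt (by omega),
      map_zero, h.deriv_zero, add_zero]

theorem coeff_toPoly_pow_mul (i : ℕ) (s : S) :
    (h.toPoly (x ^ i * s)).coeff (i + (h.toPoly s).natDegree) =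
      (σ ^ i) (h.toPoly s).leadingCoeff := by
  induction i with
  | zero => simp
  | succ i ih =>
    have hdeg := h.natDegree_toPoly_pow_mul_le i s
    rw [pow_succ', mul_assoc, add_right_comm, coeff_toPoly_x_mul, ih,
      coeff_eq_zero_of_natDegree_lt (n := i + _ + 1) (by omega), h.deriv_zero, add_zero, pow_succ',
      RingHom.mul_def, RingHom.comp_apply]

theorem toPoly_mul (s t : S) :
    h.toPoly (s * t) = (h.toPoly s).sum fun i r => C r * h.toPoly (x ^ i * t) := by
  induction s using h.induction_on with
  | add s t' hs ht' =>
    rw [add_mul, map_add, hs, ht', map_add, sum_add_index _ _ _ (by simp) (by simp [add_mul])]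
  | map_mul_pow r i =>
    rw [mul_assoc, toPoly_map_mul, toPoly_map_mul_pow, sum_monomial_index _ _ (by simp)]

theorem natDegree_toPoly_mul_le (s t : S) :
    (h.toPoly (s * t)).natDegree ≤ (h.toPoly s).natDegree + (h.toPoly t).natDegree := by
  rw [toPoly_mul]
  refine natDegree_sum_le_of_forall_le _ _ fun i hi => (natDegree_C_mul_le _ _).trans <|
    (h.natDegree_toPoly_pow_mul_le i t).trans ?_
  gcongr
  exact le_natDegree_of_mem_supp i hi

theorem coeff_toPoly_mul (s t : S) :
    (h.toPoly (s * t)).coeff ((h.toPoly s).natDegree + (h.toPoly t).natDegree) =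
      (h.toPoly s).leadingCoeff *
        (σ ^ (h.toPoly s).natDegree) (h.toPoly t).leadingCoeff := by
  rw [toPoly_mul, sum_over_range _ (by simp), finsetSum_coeff, Finset.sum_range_succ, coeff_C_mul,
    coeff_toPoly_pow_mul, coeff_natDegree, add_eq_right]
  refine Finset.sum_eq_zero fun i hi => ?_
  have hlt := Finset.mem_range.1 hi
  have hdeg := h.natDegree_toPoly_pow_mul_le i t
  rw [coeff_C_mul, coeff_eq_zero_of_natDegree_lt (hdeg.trans_lt (by gcongr)), mul_zero]

theorem leadingCoeff_mul_eq_of_commute {a b : S} (hab : b * a = a * b) :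
    (h.toPoly b).leadingCoeff * (σ ^ (h.toPoly b).natDegree) (h.toPoly a).leadingCoeff =
      (h.toPoly a).leadingCoeff * (σ ^ (h.toPoly a).natDegree) (h.toPoly b).leadingCoeff := by
  rw [← coeff_toPoly_mul, ← coeff_toPoly_mul, hab, add_comm]

theorem degree_toPoly_mul [NoZeroDivisors R] (hσ : Function.Injective σ) (s t : S) :
    (h.toPoly (s * t)).degree = (h.toPoly s).degree + (h.toPoly t).degree := by
  by_cases hs : s = 0
  · simp [hs]
  by_cases ht : t = 0
  · simp [ht]
  have hs' : h.toPoly s ≠ 0 := by simpa using hs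
  have ht' : h.toPoly t ≠ 0 := by simpa using ht
  rw [degree_eq_natDegree hs', degree_eq_natDegree ht', ← Nat.cast_add]
  refine degree_eq_of_le_of_coeff_ne_zero
    (natDegree_le_iff_degree_le.1 (h.natDegree_toPoly_mul_le s t)) ?_
  have hσ_pow : Function.Injective (σ ^ (h.toPoly s).natDegree) := by
    rw [RingHom.coe_pow]
    exact hσ.iterate _
  rw [coeff_toPoly_mul]
  exact mul_ne_zero (leadingCoeff_ne_zero.2 hs')
    ((map_ne_zero_iff _ hσ_pow).2 (leadingCoeff_ne_zero.2 ht'))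

include h in
theorem commute_map {r : R} (hr : ∀ r', Commute r r') (hσ : σ r = r) (hδ : δ r = 0) (s : S) :
    Commute (ι r) s := by
  have hx : Commute (ι r) x := by simp [Commute, SemiconjBy, h.comm_rule, hσ, hδ]
  induction s using h.induction_on with
  | add s t hs ht => exact hs.add_right ht
  | map_mul_pow r' i => exact ((hr r').map ι).mul_right (hx.pow_right i)

end Ring

end IsOreExtension

section Composition

open Polynomial

theorem comp_ne_zero_of_natDegree_pos [CommRing R] [IsDomain R] {q r : R[X]} (hr : r ≠ 0)
    (hq : 0 < q.natDegree) : r.comp q ≠ 0 := by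
  rw [Ne, comp_eq_zero_iff]
  rintro (hr0 | ⟨-, hqC⟩)
  · exact hr hr0
  · rw [hqC, natDegree_C] at hq
    exact hq.false

section EndomorphismOverC

variable [CommRing R] {σ : R[X] →+* R[X]} (hσC : ∀ c : R, σ (C c) = C c)

include hσC

theorem map_eq_comp_of_map_C (r : R[X]) : σ r = r.comp (σ X) :=
  RingHom.congr_fun (ringHom_ext (g := compRingHom (σ X)) (by simp [hσC]) (by simp)) r

theorem pow_map_C (n : ℕ) (c : R) : (σ ^ n) (C c) = C c := by
  rw [RingHom.coe_pow, Function.iterate_fixed (hσC c)]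

theorem natDegree_pow_map [IsDomain R] (n : ℕ) (r : R[X]) :
    ((σ ^ n) r).natDegree = r.natDegree * (σ X).natDegree ^ n := by
  induction n with
  | zero => simp
  | succ n ih =>
    rw [pow_succ', RingHom.mul_def, RingHom.comp_apply, map_eq_comp_of_map_C hσC, natDegree_comp,
      ih, pow_succ, mul_assoc]

theorem injective_of_natDegree_map_X_pos [IsDomain R] (hσX : 0 < (σ X).natDegree) :
    Function.Injective σ := by
  refine (injective_iff_map_eq_zero σ).2 fun r hr => by_contra fun hr0 => ?_
  rw [map_eq_comp_of_map_C hσC] at hr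
  exact comp_ne_zero_of_natDegree_pos hr0 hσX hr

end EndomorphismOverC

variable {K : Type*} [Field K]

theorem isOneDimDegree_degree : IsOneDimDegree K (degree : K[X] → WithBot ℕ) where
  eq_bot_iff _ := degree_eq_bot
  map_mul _ _ := degree_mul
  exists_sub_smul_lt b c hb hc hbc := by
    have hb' := leadingCoeff_ne_zero.2 hb
    have hc' := leadingCoeff_ne_zero.2 hc
    refine ⟨b.leadingCoeff / c.leadingCoeff, degree_sub_lt_left ?_ hb ?_⟩
    · rw [smul_eq_C_mul, degree_C_mul (div_ne_zero hb' hc'), hbc]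
    · rw [smul_eq_C_mul, leadingCoeff_mul, leadingCoeff_C, div_mul_cancel₀ _ hc']

theorem natDegree_add_eq_of_mul_eq_mul_comp [CommRing R] [IsDomain R] {q α α' β : R[X]}
    (hq : 0 < q.natDegree) (hα : α ≠ 0) (hβ : β * α' = α * β.comp q) (hβ0 : β ≠ 0) :
    β.natDegree + α'.natDegree = α.natDegree + β.natDegree * q.natDegree := by
  have hcomp : β.comp q ≠ 0 := comp_ne_zero_of_natDegree_pos hβ0 hq
  have hα' : α' ≠ 0 := by
    rintro rfl
    simp [hα, hcomp] at hβ
  rw [← natDegree_mul hβ0 hα', hβ, natDegree_mul hα hcomp, natDegree_comp]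

theorem natDegree_eq_of_mul_eq_mul_comp [CommRing R] [IsDomain R] {q α α' β γ : R[X]}
    (hq : 1 < q.natDegree) (hα : α ≠ 0) (hβ : β * α' = α * β.comp q) (hβ0 : β ≠ 0)
    (hγ : γ * α' = α * γ.comp q) (hγ0 : γ ≠ 0) : β.natDegree = γ.natDegree := by
  have hβ_deg := natDegree_add_eq_of_mul_eq_mul_comp (by omega) hα hβ hβ0
  have hγ_deg := natDegree_add_eq_of_mul_eq_mul_comp (by omega) hα hγ hγ0
  nlinarith

theorem eq_C_mul_of_mul_eq_mul_comp {q α α' β γ : K[X]} (hq : 1 < q.natDegree) (hα : α ≠ 0)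
    (hβ : β * α' = α * β.comp q) (hγ : γ * α' = α * γ.comp q) (hγ0 : γ ≠ 0) :
    ∃ k : K, β = C k * γ := by
  let k := β.coeff γ.natDegree / γ.leadingCoeff
  refine ⟨k, sub_eq_zero.1 (by_contra fun hne => hne ?_)⟩
  have hsub : (β - C k * γ) * α' = α * (β - C k * γ).comp q := by
    rw [sub_comp, mul_comp, C_comp]
    linear_combination hβ - C k * hγ
  have hdeg := natDegree_eq_of_mul_eq_mul_comp hq hα hsub hne hγ hγ0
  rw [← leadingCoeff_eq_zero, leadingCoeff, hdeg, coeff_sub, coeff_C_mul, coeff_natDegree,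
    div_mul_cancel₀ _ (leadingCoeff_ne_zero.2 hγ0), sub_self]

end Composition

namespace IsOreExtension

open Polynomial

variable {K : Type*} [Field K] [Ring S] {ι : K[X] →+* S} {σ : K[X] →+* K[X]} {δ : K[X] → K[X]}
  {x : S} (h : IsOreExtension ι σ δ x) {a : S}

theorem natDegree_toPoly_eq_zero_of_commute (hσC : ∀ k : K, σ (C k) = C k)
    (hσX : 1 < (σ X).natDegree) {b : S} (hab : b * a = a * b) (ha : (h.toPoly a).natDegree = 0)
    (ha' : 0 < ((h.toPoly a).coeff 0).natDegree) :
    (h.toPoly b).natDegree = 0 := by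
  by_contra hm
  have hb : (h.toPoly b).leadingCoeff ≠ 0 :=
    leadingCoeff_ne_zero.2 (ne_zero_of_natDegree_gt (Nat.pos_of_ne_zero hm))
  have hcomm := h.leadingCoeff_mul_eq_of_commute hab
  rw [leadingCoeff, leadingCoeff, ha, pow_zero, RingHom.one_def, RingHom.id_apply, mul_comm,
    ← leadingCoeff] at hcomm
  have hdeg := congrArg natDegree (mul_right_cancel₀ hb hcomm)
  rw [natDegree_pow_map hσC] at hdeg
  exact (Nat.one_lt_pow hm hσX).ne' (Nat.eq_of_mul_eq_mul_left ha' (by rw [hdeg, mul_one]))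

variable [Algebra K S] (hι : ∀ k : K, algebraMap K S k = ι (C k))

include hι

theorem toPoly_smul (k : K) (s : S) : h.toPoly (k • s) = C (C k) * h.toPoly s := by
  rw [Algebra.smul_def, hι, toPoly_map_mul]

variable (hσC : ∀ k : K, σ (C k) = C k) (hσX : 1 < (σ X).natDegree)

include hσC hσX

theorem isOneDimDegree_of_natDegree_pos (ha : 0 < (h.toPoly a).natDegree) :
    IsOneDimDegree K fun b : Subalgebra.centralizer K {a} => (h.toPoly b).degree where
  eq_bot_iff b := by simp
  map_mul b c := h.degree_toPoly_mul (injective_of_natDegree_map_X_pos hσC (by omega)) b c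
  exists_sub_smul_lt b c hb hc hbc := by
    have ha0 : h.toPoly a ≠ 0 := ne_zero_of_natDegree_gt ha
    have hb0 : h.toPoly b ≠ 0 := by simpa using hb
    have hc0 : h.toPoly c ≠ 0 := by simpa using hc
    set n := (h.toPoly a).natDegree
    have hcomm : ∀ e : Subalgebra.centralizer K {a},
        (h.toPoly e).leadingCoeff * (σ ^ (h.toPoly e).natDegree) (h.toPoly a).leadingCoeff =
          (h.toPoly a).leadingCoeff * (h.toPoly e).leadingCoeff.comp ((σ ^ n) X) := fun e => by
      rw [← map_eq_comp_of_map_C (pow_map_C hσC n)]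
      exact h.leadingCoeff_mul_eq_of_commute (mem_centralizer_singleton_iff.1 e.2)
    have hn : 1 < ((σ ^ n) X).natDegree := by
      rw [natDegree_pow_map hσC, natDegree_X, one_mul]
      exact Nat.one_lt_pow ha.ne' hσX
    obtain ⟨k, hk⟩ := eq_C_mul_of_mul_eq_mul_comp hn (leadingCoeff_ne_zero.2 ha0) (hcomm b)
      (by rw [natDegree_eq_of_degree_eq hbc]; exact hcomm c) (leadingCoeff_ne_zero.2 hc0)
    have hk0 : k ≠ 0 := by
      rintro rfl
      simp [hb0] at hk
    refine ⟨k, ?_⟩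
    rw [Subalgebra.coe_sub, Subalgebra.coe_smul, map_sub, h.toPoly_smul hι]
    refine degree_sub_lt_left ?_ hb0 ?_
    · rw [degree_C_mul (C_ne_zero.2 hk0), hbc]
    · rw [leadingCoeff_mul, leadingCoeff_C, hk]

theorem isOneDimDegree_of_natDegree_eq_zero (ha : (h.toPoly a).natDegree = 0)
    (ha' : 0 < ((h.toPoly a).coeff 0).natDegree) :
    IsOneDimDegree K fun b : Subalgebra.centralizer K {a} => ((h.toPoly b).coeff 0).degree := by
  have hmap : ∀ b : Subalgebra.centralizer K {a}, (b : S) = ι ((h.toPoly b).coeff 0) := fun b =>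
    h.eq_map_of_natDegree_eq_zero <| h.natDegree_toPoly_eq_zero_of_commute hσC hσX
      (mem_centralizer_singleton_iff.1 b.2) ha ha'
  have hzero : ∀ b : Subalgebra.centralizer K {a}, (h.toPoly b).coeff 0 = 0 ↔ b = 0 := fun b =>
    ⟨fun hb => Subtype.ext (by rw [hmap b, hb, map_zero]; rfl), by rintro rfl; simp⟩
  refine ⟨fun b => degree_eq_bot.trans (hzero b), fun b c => ?_, fun b c hb hc hbc => ?_⟩
  · rw [← degree_mul, Subalgebra.coe_mul, ← coeff_C_mul, ← toPoly_map_mul, ← hmap]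
  · obtain ⟨k, hk⟩ := isOneDimDegree_degree.exists_sub_smul_lt _ _ (mt (hzero b).1 hb)
      (mt (hzero c).1 hc) hbc
    refine ⟨k, ?_⟩
    rwa [Subalgebra.coe_sub, Subalgebra.coe_smul, map_sub, h.toPoly_smul hι, coeff_sub, coeff_C_mul,
      ← smul_eq_C_mul]

include h in
theorem exists_isOneDimDegree_centralizer (ha : ∀ k : K, a ≠ ι (C k)) :
    ∃ d : Subalgebra.centralizer K {a} → WithBot ℕ,
      IsOneDimDegree K d ∧ 0 < d (selfCentralizer K a) := by
  rcases Nat.eq_zero_or_pos (h.toPoly a).natDegree with ha_zero | ha_pos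
  · have ha' : 0 < ((h.toPoly a).coeff 0).natDegree := by
      refine Nat.pos_of_ne_zero fun hα => ha (((h.toPoly a).coeff 0).coeff 0) ?_
      rw [← eq_C_of_natDegree_eq_zero hα]
      exact h.eq_map_of_natDegree_eq_zero ha_zero
    exact ⟨_, h.isOneDimDegree_of_natDegree_eq_zero hι hσC hσX ha_zero ha',
      natDegree_pos_iff_degree_pos.1 ha'⟩
  · exact ⟨_, h.isOneDimDegree_of_natDegree_pos hι hσC hσX ha_pos,
      natDegree_pos_iff_degree_pos.1 ha_pos⟩

end IsOreExtension

open Polynomial in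
/-- **Richter, Proposition 3.2.** Let `𝕜` be a field, `R = 𝕜[y]`, `σ` the
endomorphism of `R` fixing `𝕜` with `σ(y) = p(y)` where `deg p > 1`, and `δ` a
`σ`-derivation vanishing on `𝕜`. If `a ∈ S = R[x; σ, δ]` with `a ∉ 𝕜`, then `C_S(a)` is
a free `𝕜[a]`-module of finite rank. -/
theorem richter_centralizer_finite_rank {K : Type*} [Field K] [Ring S]
    (σ : K[X] →+* K[X]) (p : K[X]) (hp : 1 < p.natDegree)
    (hσC : ∀ a : K, σ (C a) = C a) (hσX : σ X = p)
    (δ : K[X] → K[X]) (hδC : ∀ a : K, δ (C a) = 0)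
    (ι : K[X] →+* S) (x : S) (h : IsOreExtension ι σ δ x)
    (a : S) (ha : ∀ c : K, a ≠ ι (C c)) :
    IsFreeModuleOfFiniteRank (polysIn ι {r : K[X] | ∃ c : K, r = C c} a)
      (centralizerOf a) := by
  subst hσX
  have hcenter : ∀ (k : K) (s : S), Commute (ι (C k)) s := fun k =>
    h.commute_map (Commute.all (C k)) (hσC k) (hδC k)
  let _ : Algebra K S := (ι.comp C).toAlgebra' fun k s => hcenter k s
  have hι : ∀ k : K, algebraMap K S k = ι (C k) := fun _ => rfl
  obtain ⟨d, hd, hda⟩ := h.exists_isOneDimDegree_centralizer hι hσC hp ha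
  have := hd.finite_aeval hda
  have := hd.free_aeval hda
  exact isFreeModuleOfFiniteRank_centralizerOf hι a
end
end

section
/- Let 𝕜 be a field, R = 𝕜[y], σ the endomorphism of R with σ(y) = qy and σ fixing 𝕜, and δ the σ-derivation with δ(y) = 1 and δ vanishing on 𝕜, where q ∈ 𝕜 is a root of unity. Let S = R[x;σ,δ] and let C be the center of S. If a and b are commuting elements of S, then there is a nonzero polynomial f(s,t) ∈ C[s,t] such that f(a,b) = 0. -/
open Finsupp

noncomputable section

variable {R S : Type*}

/-!
Let `y = ι X`, so that `x * y = q * y * x + 1`. If `1 + q + ⋯ + q ^ (n - 1) = 0` and `q ^ n = 1`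
for some `n > 0`, then `x ^ n` and `y ^ n` are central, `S` is finite over its center, and already
`a` alone is integral over the center. Otherwise `q = 1` in characteristic zero, and `S` is the Weyl
algebra. If `e` has positive order `n` with leading coefficient `α`, and `f` of order `m` with
leading coefficient `β` commutes with `e`, then the top order part of `e * f - f * e` gives
`n * α * β' = m * β * α'`. Any two solutions `β` are proportional over `K`, so the centralizer of
`e` gains at most one dimension in each order. There is therefore no room in it for the
quadratically many products `a ^ i * b ^ j` to be linearly independent; take `e = a` or `e = b`,
unless both have order zero, when the same count works with degrees in `y`.
-/

section

open Polynomial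

section LinearAlgebra

variable {K A : Type*}

theorem rank_le_rank_add_one [DivisionRing K] [AddCommGroup A] [Module K A] {V W : Submodule K A}
    (h : ∀ u ∈ W, u ∉ V → ∀ s ∈ W, ∃ c : K, s - c • u ∈ V) :
    Module.rank K W ≤ Module.rank K V + 1 := by
  obtain ⟨u, hu⟩ : ∃ u, W ≤ V ⊔ K ∙ u := by
    by_cases hWV : W ≤ V
    · exact ⟨0, hWV.trans le_sup_left⟩
    · obtain ⟨u, huW, huV⟩ := SetLike.not_le_iff_exists.1 hWV
      refine ⟨u, fun s hs => ?_⟩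
      obtain ⟨c, hc⟩ := h u huW huV s hs
      exact Submodule.mem_sup.2 ⟨_, hc, c • u, Submodule.mem_span_singleton.2 ⟨c, rfl⟩, by abel⟩
  calc Module.rank K W ≤ Module.rank K ↥(V ⊔ K ∙ u) := Submodule.rank_mono hu
    _ ≤ Module.rank K V + Module.rank K (K ∙ u) := Submodule.rank_add_le_rank_add_rank _ _
    _ ≤ Module.rank K V + 1 := by
        gcongr
        simpa using rank_span_le (R := K) {u}

-- The products with `i, j ≤ 2 * d + 1` outnumber the dimension of the space they lie in.
theorem not_linearIndependent_pow_mul_pow_of_rank_le [CommRing K] [Nontrivial K] [Ring A]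
    [Algebra K A] {V : ℕ → Submodule K A} (hmono : Monotone V)
    (hrank : ∀ N, Module.rank K (V N) ≤ N) {a b : A} {d : ℕ}
    (hab : ∀ i j, a ^ i * b ^ j ∈ V (d * (i + j) + 1)) :
    ¬ LinearIndependent K fun p : ℕ × ℕ => a ^ p.1 * b ^ p.2 := by
  intro hli
  let e : Fin (2 * d + 2) × Fin (2 * d + 2) → ℕ × ℕ := Prod.map Fin.val Fin.val
  have he : Function.Injective e := Fin.val_injective.prodMap Fin.val_injective
  have hmem : ∀ p, a ^ (e p).1 * b ^ (e p).2 ∈ V (d * (4 * d + 2) + 1) := fun p =>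
    hmono (Nat.succ_le_succ (Nat.mul_le_mul_left d (by grind))) (hab _ _)
  have hli' : LinearIndependent K fun p => (⟨_, hmem p⟩ : V (d * (4 * d + 2) + 1)) :=
    .of_comp (V _).subtype (hli.comp e he)
  have hcard : (2 * d + 2) * (2 * d + 2) ≤ d * (4 * d + 2) + 1 := by
    have := hli'.cardinal_lift_le_rank.trans (Cardinal.lift_le.2 (hrank _))
    rw [Cardinal.mk_fintype, Fintype.card_prod, Fintype.card_fin] at this
    simpa only [Cardinal.lift_natCast, Nat.cast_le] using this
  nlinarith

end LinearAlgebra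

section Center

theorem exists_center_relation_of_not_linearIndependent {Z S : Type*} [CommRing Z] [Ring S]
    [Algebra Z S] [FaithfulSMul Z S] {a b : S}
    (h : ¬ LinearIndependent Z fun p : ℕ × ℕ => a ^ p.1 * b ^ p.2) :
    ∃ c : ℕ × ℕ →₀ S, c ≠ 0 ∧ (∀ p, c p ∈ Set.center S) ∧
      (c.sum fun q z => z * a ^ q.1 * b ^ q.2) = 0 := by
  obtain ⟨l, hl, hl0⟩ : ∃ l : ℕ × ℕ →₀ Z,
      Finsupp.linearCombination Z (fun p : ℕ × ℕ => a ^ p.1 * b ^ p.2) l = 0 ∧ l ≠ 0 := by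
    simpa [linearIndependent_iff] using h
  refine ⟨l.mapRange (algebraMap Z S) (map_zero _), ?_, fun p => ?_, ?_⟩
  · rwa [Ne, Finsupp.mapRange_eq_zero (FaithfulSMul.algebraMap_injective Z S)]
  · exact Semigroup.mem_center_iff.2 fun s => (Algebra.commutes _ s).symm
  · rw [Finsupp.sum_mapRange_index (by simp), ← hl, Finsupp.linearCombination_apply]
    simp only [Algebra.smul_def, mul_assoc]

theorem not_linearIndependent_pow_mul_pow_of_finite {Z S : Type*} [CommRing Z] [Nontrivial Z]
    [Ring S] [Algebra Z S] [Module.Finite Z S] (a b : S) :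
    ¬ LinearIndependent Z fun p : ℕ × ℕ => a ^ p.1 * b ^ p.2 := by
  intro hli
  have := hli.comp (fun i : ℕ => (i, 0)) (Prod.mk_left_injective 0)
  exact Module.Finite.not_linearIndependent_of_infinite _ this

end Center

section QuantumPlane

variable {K A : Type*} [CommRing K] [Ring A] [Algebra K A] {q : K} {x y : A}

theorem pow_succ_mul_of_mul_eq_smul_add_one (h : x * y = q • (y * x) + 1) (n : ℕ) :
    x ^ (n + 1) * y =
      q ^ (n + 1) • (y * x ^ (n + 1)) + (∑ i ∈ Finset.range (n + 1), q ^ i) • x ^ n := by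
  induction n with
  | zero => simpa using h
  | succ n ih =>
    rw [pow_succ' x (n + 1), mul_assoc, ih, mul_add, mul_smul_comm, mul_smul_comm, ← mul_assoc x y,
      h, add_mul, smul_mul_assoc, one_mul, smul_add, smul_smul, ← pow_succ, ← pow_succ',
      Finset.sum_range_succ _ (n + 1), add_smul, mul_assoc, ← pow_succ']
    abel

theorem commute_pow_of_geom_sum_eq_zero (h : x * y = q • (y * x) + 1) {n : ℕ} (hqn : q ^ n = 1)
    (hsum : ∑ i ∈ Finset.range n, q ^ i = 0) : Commute (x ^ n) y := by
  cases n with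
  | zero => simp
  | succ n => simpa [hqn, hsum, commute_iff_eq] using pow_succ_mul_of_mul_eq_smul_add_one h n

theorem commute_pow_right_of_geom_sum_eq_zero (h : x * y = q • (y * x) + 1) {n : ℕ}
    (hqn : q ^ n = 1) (hsum : ∑ i ∈ Finset.range n, q ^ i = 0) : Commute x (y ^ n) := by
  have hop : MulOpposite.op y * MulOpposite.op x =
      q • (MulOpposite.op x * MulOpposite.op y) + 1 := congrArg MulOpposite.op h
  simpa using (commute_pow_of_geom_sum_eq_zero hop hqn hsum).unop.symm

theorem exists_geom_sum_eq_zero_or_eq_one {K : Type*} [Field K] {q : K} {k : ℕ} (hk : 0 < k)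
    (hq : q ^ k = 1) :
    (∃ n, 0 < n ∧ q ^ n = 1 ∧ ∑ i ∈ Finset.range n, q ^ i = 0) ∨ q = 1 ∧ CharZero K := by
  by_cases hq1 : q = 1
  · obtain _ | ⟨p, hp, hchar⟩ := CharP.exists' K
    · exact .inr ⟨hq1, ‹_›⟩
    · exact .inl ⟨p, hp.out.pos, by simp [hq1]⟩
  · exact .inl ⟨k, hk, hq, by rw [geom_sum_eq hq1, hq, sub_self, zero_div]⟩

end QuantumPlane

section MapCoeffs

open scoped Differential
open Differential

variable [CommRing R] [Differential R]

theorem natDegree_mapCoeffs_le (q : R[X]) : (mapCoeffs q).natDegree ≤ q.natDegree :=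
  natDegree_le_iff_coeff_eq_zero.2 fun n hn => by
    rw [coeff_mapCoeffs, coeff_eq_zero_of_natDegree_lt hn, map_zero]

theorem natDegree_iterate_mapCoeffs_le (k : ℕ) (q : R[X]) :
    (mapCoeffs^[k] q).natDegree ≤ q.natDegree := by
  induction k generalizing q with
  | zero => rfl
  | succ k ih => exact (ih _).trans (natDegree_mapCoeffs_le q)

theorem natDegree_hasseDeriv_mul_iterate_mapCoeffs_le (k : ℕ) (p q : R[X]) :
    (hasseDeriv k p * mapCoeffs^[k] q).natDegree ≤ p.natDegree - k + q.natDegree :=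
  natDegree_mul_le_of_le (natDegree_hasseDeriv_le p k) (natDegree_iterate_mapCoeffs_le k q)

theorem coeff_sum_hasseDeriv_mul_iterate_mapCoeffs {p q : R[X]} {N : ℕ}
    (hN : p.natDegree + q.natDegree ≤ N + 1) (B : ℕ) :
    (∑ k ∈ Finset.range (B + 2), hasseDeriv k p * mapCoeffs^[k] q).coeff N =
      (p * q).coeff N + (derivative p * mapCoeffs q).coeff N := by
  have hlow : ∀ k, (hasseDeriv (k + 2) p * mapCoeffs^[k + 2] q).coeff N = 0 := fun k => by
    rcases lt_or_ge p.natDegree (k + 2) with hk | hk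
    · rw [hasseDeriv_eq_zero_of_lt_natDegree _ _ hk, zero_mul, coeff_zero]
    · exact coeff_eq_zero_of_natDegree_lt <|
        (natDegree_hasseDeriv_mul_iterate_mapCoeffs_le _ p q).trans_lt (by lia)
  rw [Finset.sum_range_succ', Finset.sum_range_succ', coeff_add, coeff_add, finsetSum_coeff,
    Finset.sum_eq_zero fun k _ => hlow k, hasseDeriv_zero', hasseDeriv_one]
  simp only [zero_add, Function.iterate_zero, Function.iterate_one, id, add_comm]

theorem coeff_derivative_mul_mapCoeffs {p q : R[X]} {n m N : ℕ} (hp : p.natDegree ≤ n)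
    (hq : q.natDegree ≤ m) (hN : n + m = N + 1) :
    (derivative p * mapCoeffs q).coeff N = n * (p.coeff n * (q.coeff m)′) := by
  rcases n with _ | n
  · rw [derivative_of_natDegree_zero (Nat.le_zero.1 hp)]
    simp
  obtain rfl : N = n + m := by lia
  rw [coeff_mul_add_eq_of_natDegree_le ((natDegree_derivative_le p).trans (by lia))
    ((natDegree_mapCoeffs_le q).trans hq), coeff_derivative, coeff_mapCoeffs]
  push_cast
  ring

end MapCoeffs

namespace IsOreExtension

section Ring

variable [Ring R] [Ring S] {ι : R →+* S} {σ : R →+* R} {δ : R → R} {x : S}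

-- `eval₂ ι x p` is `∑ ι (p.coeff i) * x ^ i`, with coefficients on the left; it is not
-- multiplicative in `p`.
theorem eval₂_bijective (h : IsOreExtension ι σ δ x) : Function.Bijective (eval₂ ι x) := by
  let e : R[X] ≃ (ℕ →₀ R) := (toFinsuppIso R).toEquiv.trans AddMonoidAlgebra.coeffEquiv
  have he : ∀ p : R[X], eval₂ ι x p = (e p).sum fun i r => ι r * x ^ i := fun p => eval₂_eq_sum
  refine ⟨fun p p' hp => e.injective ?_, fun s => ?_⟩
  · exact (h.repr_uniq (eval₂ ι x p)).unique (he p) (hp.trans (he p'))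
  · obtain ⟨c, hc, -⟩ := h.repr_uniq s
    exact ⟨e.symm c, by rw [he, e.apply_symm_apply, ← hc]⟩

protected theorem nontrivial [Nontrivial R] (h : IsOreExtension ι σ δ x) : Nontrivial S :=
  h.eval₂_bijective.injective.nontrivial

theorem mem_center_of_commute (h : IsOreExtension ι σ δ x) {z : S} (hι : ∀ r, Commute (ι r) z)
    (hx : Commute x z) : z ∈ Set.center S := by
  refine Semigroup.mem_center_iff.2 fun s => ?_
  obtain ⟨p, rfl⟩ := h.eval₂_bijective.surjective s
  rw [eval₂_eq_sum, Polynomial.sum]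
  exact (Commute.sum_left _ _ _ fun i _ => (hι _).mul_left (hx.pow_left i)).eq

end Ring

theorem map_mem_center [CommRing R] [Ring S] {ι : R →+* S} {σ : R →+* R} {δ : R → R} {x : S}
    (h : IsOreExtension ι σ δ x) {r : R} (hσ : σ r = r) (hδ : δ r = 0) :
    ι r ∈ Set.center S := by
  refine h.mem_center_of_commute (fun t => (Commute.all t r).map ι) ?_
  rw [commute_iff_eq, h.comm_rule, hσ, hδ, map_zero, add_zero]

section Differential

open scoped Differential
open Differential

variable [CommRing R] [Differential R] [Ring S] {ι : R →+* S} {x : S}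

theorem mul_eval₂ (h : IsOreExtension ι (RingHom.id R) (deriv : R → R) x) (q : R[X]) :
    x * eval₂ ι x q = eval₂ ι x (X * q + mapCoeffs q) := by
  induction q using Polynomial.induction_on' with
  | add p q hp hq => simp only [mul_add, eval₂_add, hp, hq, map_add]; abel
  | monomial n r =>
    simp only [X_mul_monomial, mapCoeffs_monomial, eval₂_add, eval₂_monomial]
    rw [← mul_assoc, h.comm_rule, add_mul, mul_assoc, ← pow_succ', RingHom.id_apply]

theorem pow_mul_eval₂ (h : IsOreExtension ι (RingHom.id R) (deriv : R → R) x) (n : ℕ)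
    (q : R[X]) :
    x ^ n * eval₂ ι x q =
      eval₂ ι x (∑ k ∈ Finset.range (n + 1), n.choose k • (X ^ (n - k) * mapCoeffs^[k] q)) := by
  -- On left normal forms, `x` acts as the sum of the commuting operators `D` and `M`.
  let D : Module.End ℤ R[X] := mapCoeffs.toLinearMap
  let M : Module.End ℤ R[X] := LinearMap.mulLeft ℤ X
  have hDM : Commute D M := by
    refine LinearMap.ext fun q => ?_
    simp [D, M]
  have hpow : x ^ n * eval₂ ι x q = eval₂ ι x (((D + M) ^ n) q) := by
    induction n with
    | zero => simp
    | succ n ih => rw [pow_succ', mul_assoc, ih, h.mul_eval₂, pow_succ', add_comm (X * _)]; rfl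
  rw [hpow, hDM.add_pow, LinearMap.sum_apply]
  congr 1
  refine Finset.sum_congr rfl fun k _ => ?_
  rw [← Nat.cast_comm, ← nsmul_eq_mul, LinearMap.smul_apply, (hDM.pow_pow _ _).eq,
    LinearMap.pow_mulLeft, Module.End.mul_apply, LinearMap.mulLeft_apply, Module.End.pow_apply]
  rfl

theorem eval₂_mul_eval₂ (h : IsOreExtension ι (RingHom.id R) (deriv : R → R) x) {p : R[X]}
    {B : ℕ} (hp : p.natDegree < B) (q : R[X]) :
    eval₂ ι x p * eval₂ ι x q =
      eval₂ ι x (∑ k ∈ Finset.range B, hasseDeriv k p * mapCoeffs^[k] q) := by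
  have hmon : ∀ n < B, ∀ r : R, eval₂ ι x (monomial n r) * eval₂ ι x q =
      eval₂ ι x (∑ k ∈ Finset.range B, hasseDeriv k (monomial n r) * mapCoeffs^[k] q) := by
    intro n hn r
    rw [eval₂_monomial, mul_assoc, h.pow_mul_eval₂, ← eval₂_smul, Finset.smul_sum]
    congr 1
    refine Finset.sum_subset_zero_on_sdiff (Finset.range_mono hn) (fun k hk => ?_) fun k _ => ?_
    · rw [hasseDeriv_monomial, Nat.choose_eq_zero_of_lt (by grind)]
      simp
    · rw [hasseDeriv_monomial, ← C_mul_X_pow_eq_monomial]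
      simp only [nsmul_eq_mul, smul_eq_C_mul, C_mul, C_eq_natCast]
      ring
  rw [p.as_sum_range' B hp]
  simp only [map_sum, Finset.sum_mul]
  rw [Finset.sum_comm, eval₂_finsetSum, eval₂_finsetSum, Finset.sum_mul]
  refine Finset.sum_congr rfl fun n hn => ?_
  rw [hmon n (Finset.mem_range.1 hn)]

theorem natCast_mul_coeff_mul_deriv_coeff_eq_of_commute
    (h : IsOreExtension ι (RingHom.id R) (deriv : R → R) x) {p q : R[X]} {n m : ℕ}
    (hp : p.natDegree ≤ n) (hq : q.natDegree ≤ m) (hpq : Commute (eval₂ ι x p) (eval₂ ι x q)) :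
    n * (p.coeff n * (q.coeff m)′) = m * (q.coeff m * (p.coeff n)′) := by
  rcases Nat.eq_zero_or_pos (n + m) with hnm | hnm
  · obtain ⟨rfl, rfl⟩ := Nat.add_eq_zero_iff.1 hnm
    simp
  obtain ⟨N, hN⟩ := Nat.exists_eq_add_of_lt hnm
  have hprod := hpq.eq
  rw [h.eval₂_mul_eval₂ (B := n + m + 2) (by lia), h.eval₂_mul_eval₂ (B := n + m + 2) (by lia)]
    at hprod
  have hcoeff := congrArg (coeff · N) (h.eval₂_bijective.injective hprod)
  simp only [coeff_sum_hasseDeriv_mul_iterate_mapCoeffs (p := p) (q := q) (N := N) (by lia),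
    coeff_sum_hasseDeriv_mul_iterate_mapCoeffs (p := q) (q := p) (N := N) (by lia), mul_comm q p,
    add_right_inj] at hcoeff
  rwa [coeff_derivative_mul_mapCoeffs hp hq (by lia),
    coeff_derivative_mul_mapCoeffs hq hp (by lia)] at hcoeff

end Differential

end IsOreExtension

section OrderLT

variable {K : Type*} [CommRing K] [CommRing R] [Ring S] [Algebra K R] [Algebra K S]

/-- The elements `∑ ι (r i) * x ^ i`, `i < N`, of order less than `N`, regarding `x` as a
differential operator with coefficients in `R`. -/
def orderLT (ι : R →ₐ[K] S) (x : S) (N : ℕ) : Submodule K S where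
  carrier := {s | ∃ p ∈ degreeLT R N, eval₂ (ι : R →+* S) x p = s}
  zero_mem' := ⟨0, zero_mem _, eval₂_zero _ _⟩
  add_mem' := by
    rintro _ _ ⟨p, hp, rfl⟩ ⟨p', hp', rfl⟩
    exact ⟨p + p', add_mem hp hp', eval₂_add _ _⟩
  smul_mem' := by
    rintro c _ ⟨p, hp, rfl⟩
    exact ⟨algebraMap K R c • p, Submodule.smul_mem _ _ hp, by
      rw [eval₂_smul, Algebra.smul_def, AlgHom.coe_toRingHom, ι.commutes]⟩

variable {ι : R →ₐ[K] S} {x : S}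

theorem mem_orderLT {N : ℕ} {s : S} :
    s ∈ orderLT ι x N ↔ ∃ p ∈ degreeLT R N, eval₂ (ι : R →+* S) x p = s := Iff.rfl

theorem mem_orderLT_succ {n : ℕ} {s : S} :
    s ∈ orderLT ι x (n + 1) ↔ ∃ p : R[X], p.natDegree ≤ n ∧ eval₂ (ι : R →+* S) x p = s := by
  simp only [mem_orderLT, degreeLT_succ_eq_degreeLE, mem_degreeLE, natDegree_le_iff_degree_le]

theorem eval₂_mem_orderLT {p : R[X]} {n : ℕ} (hp : p.natDegree ≤ n) (hpn : p.coeff n = 0) :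
    eval₂ (ι : R →+* S) x p ∈ orderLT ι x n := by
  refine ⟨p, mem_degreeLT.2 ((degree_lt_iff_coeff_zero p n).2 fun k hk => ?_), rfl⟩
  rcases hk.eq_or_lt with rfl | hk
  · exact hpn
  · exact coeff_eq_zero_of_natDegree_lt (hp.trans_lt hk)

theorem orderLT_mono : Monotone (orderLT ι x) := fun _ _ hNM _ ⟨p, hp, hps⟩ =>
  ⟨p, degreeLT_mono hNM hp, hps⟩

theorem orderLT_zero : orderLT ι x 0 = ⊥ := by
  refine eq_bot_iff.2 ?_
  rintro _ ⟨p, hp, rfl⟩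
  simp_all [mem_degreeLT]

namespace IsOreExtension

theorem exists_mem_orderLT_succ {σ : R →+* R} {δ : R → R}
    (h : IsOreExtension (ι : R →+* S) σ δ x) (s : S) : ∃ n, s ∈ orderLT ι x (n + 1) := by
  obtain ⟨p, rfl⟩ := h.eval₂_bijective.surjective s
  exact ⟨p.natDegree, mem_orderLT_succ.2 ⟨p, le_rfl, rfl⟩⟩

open scoped Differential
open Differential

variable [Differential R]

theorem mul_mem_orderLT_succ (h : IsOreExtension (ι : R →+* S) (RingHom.id R) (deriv : R → R) x)
    {n m : ℕ} {s t : S} (hs : s ∈ orderLT ι x (n + 1)) (ht : t ∈ orderLT ι x (m + 1)) :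
    s * t ∈ orderLT ι x (n + m + 1) := by
  obtain ⟨p, hp, rfl⟩ := mem_orderLT_succ.1 hs
  obtain ⟨q, hq, rfl⟩ := mem_orderLT_succ.1 ht
  refine mem_orderLT_succ.2 ⟨_, ?_, (h.eval₂_mul_eval₂ (Nat.lt_succ_self _) q).symm⟩
  exact natDegree_sum_le_of_forall_le _ _ fun k _ =>
    (natDegree_hasseDeriv_mul_iterate_mapCoeffs_le k p q).trans (by lia)

theorem pow_mem_orderLT_succ (h : IsOreExtension (ι : R →+* S) (RingHom.id R) (deriv : R → R) x)
    {d : ℕ} {s : S} (hs : s ∈ orderLT ι x (d + 1)) (i : ℕ) : s ^ i ∈ orderLT ι x (d * i + 1) := by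
  induction i with
  | zero => exact mem_orderLT_succ.2 ⟨1, by simp, by simp⟩
  | succ i ih => simpa only [pow_succ, Nat.mul_succ] using h.mul_mem_orderLT_succ ih hs

end IsOreExtension

end OrderLT

namespace IsOreExtension

open scoped Differential
open Differential

variable [CommRing R] [IsDomain R] [CharZero R] [Differential R] [Ring S]

-- `hW` says that a quotient of elements of `R` with zero derivative is a scalar from `K`.
theorem exists_coeff_eq_smul_coeff_of_commute {K : Type*} [CommRing K] [Algebra K R] [Algebra K S]
    {ι : R →ₐ[K] S} {x : S}
    (h : IsOreExtension (ι : R →+* S) (RingHom.id R) (deriv : R → R) x)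
    (hW : ∀ f g : R, g ≠ 0 → f′ * g = f * g′ → ∃ c : K, f = c • g) {p f g : R[X]} {N : ℕ}
    (hp : p.natDegree ≠ 0) (hf : f.natDegree ≤ N) (hg : g.natDegree ≤ N) (hgN : g.coeff N ≠ 0)
    (hpf : Commute (eval₂ (ι : R →+* S) x p) (eval₂ (ι : R →+* S) x f))
    (hpg : Commute (eval₂ (ι : R →+* S) x p) (eval₂ (ι : R →+* S) x g)) :
    ∃ c : K, f.coeff N = c • g.coeff N := by
  have hlead : (p.natDegree : R) * p.leadingCoeff ≠ 0 :=
    mul_ne_zero (Nat.cast_ne_zero.2 hp) (leadingCoeff_ne_zero.2 (ne_zero_of_natDegree_gt hp.bot_lt))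
  have hf' := h.natCast_mul_coeff_mul_deriv_coeff_eq_of_commute le_rfl hf hpf
  have hg' := h.natCast_mul_coeff_mul_deriv_coeff_eq_of_commute le_rfl hg hpg
  refine hW _ _ hgN (mul_left_cancel₀ hlead ?_)
  rw [coeff_natDegree] at hf' hg'
  linear_combination g.coeff N * hf' - f.coeff N * hg'

variable {K : Type*} [Field K] [Algebra K R] [Algebra K S] {ι : R →ₐ[K] S} {x : S}

theorem rank_orderLT_succ_inf_centralizer_le
    (h : IsOreExtension (ι : R →+* S) (RingHom.id R) (deriv : R → R) x)
    (hW : ∀ f g : R, g ≠ 0 → f′ * g = f * g′ → ∃ c : K, f = c • g) {e : S} (he : e ∉ ι.range)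
    (N : ℕ) :
    Module.rank K ↥(orderLT ι x (N + 1) ⊓ (Subalgebra.centralizer K {e}).toSubmodule) ≤
      Module.rank K ↥(orderLT ι x N ⊓ (Subalgebra.centralizer K {e}).toSubmodule) + 1 := by
  obtain ⟨p, rfl⟩ := h.eval₂_bijective.surjective e
  have hp : p.natDegree ≠ 0 := fun hp =>
    he ⟨p.coeff 0, by rw [eq_C_of_natDegree_eq_zero hp, coeff_C_zero, eval₂_C]; rfl⟩
  refine rank_le_rank_add_one ?_
  rintro _ ⟨hgmem, hpg⟩ hgV _ ⟨hfmem, hpf⟩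
  obtain ⟨g, hg, rfl⟩ := mem_orderLT_succ.1 hgmem
  obtain ⟨f, hf, rfl⟩ := mem_orderLT_succ.1 hfmem
  have hgN : g.coeff N ≠ 0 := fun hgN => hgV ⟨eval₂_mem_orderLT hg hgN, hpg⟩
  obtain ⟨c, hc⟩ := h.exists_coeff_eq_smul_coeff_of_commute hW hp hf hg hgN (hpf _ rfl) (hpg _ rfl)
  refine ⟨c, ?_, sub_mem hpf (Submodule.smul_mem _ _ hpg)⟩
  have hfg : eval₂ (ι : R →+* S) x f - c • eval₂ (ι : R →+* S) x g =
      eval₂ (ι : R →+* S) x (f - algebraMap K R c • g) := by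
    rw [eval₂_sub, eval₂_smul, Algebra.smul_def, AlgHom.coe_toRingHom, ι.commutes]
  rw [hfg]
  refine eval₂_mem_orderLT ?_ (by rw [coeff_sub, coeff_smul, hc, algebraMap_smul, sub_self])
  exact (natDegree_sub_le_of_le hf ((natDegree_smul_le _ _).trans hg)).trans_eq (max_self N)

theorem not_linearIndependent_pow_mul_pow_of_notMem_range
    (h : IsOreExtension (ι : R →+* S) (RingHom.id R) (deriv : R → R) x)
    (hW : ∀ f g : R, g ≠ 0 → f′ * g = f * g′ → ∃ c : K, f = c • g) {e a b : S} (he : e ∉ ι.range)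
    (ha : Commute e a) (hb : Commute e b) :
    ¬ LinearIndependent K fun p : ℕ × ℕ => a ^ p.1 * b ^ p.2 := by
  let V : ℕ → Submodule K S :=
    fun N => orderLT ι x N ⊓ (Subalgebra.centralizer K {e}).toSubmodule
  have hmono : Monotone V := fun _ _ hNM => inf_le_inf_right _ (orderLT_mono hNM)
  have hrank : ∀ N, Module.rank K (V N) ≤ N := fun N => by
    induction N with
    | zero => simp [V, orderLT_zero]
    | succ N ih =>
      rw [Nat.cast_succ]
      exact (h.rank_orderLT_succ_inf_centralizer_le hW he N).trans (by gcongr)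
  obtain ⟨m, hm⟩ := h.exists_mem_orderLT_succ a
  obtain ⟨n, hn⟩ := h.exists_mem_orderLT_succ b
  refine not_linearIndependent_pow_mul_pow_of_rank_le hmono hrank (d := m + n) fun i j => ⟨?_, ?_⟩
  · exact orderLT_mono (by lia)
      (h.mul_mem_orderLT_succ (h.pow_mem_orderLT_succ hm i) (h.pow_mem_orderLT_succ hn j))
  · simpa [Set.mem_centralizer_iff] using ((ha.pow_right i).mul_right (hb.pow_right j)).eq

end IsOreExtension

section WeylAlgebra

theorem natDegree_eq_of_derivative_mul_eq [CommRing R] [IsDomain R] [CharZero R] {f g : R[X]}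
    (hf : f ≠ 0) (hg : g ≠ 0) (h : derivative f * g = f * derivative g) :
    f.natDegree = g.natDegree := by
  have hlead : f.leadingCoeff * g.leadingCoeff * f.natDegree =
      f.leadingCoeff * g.leadingCoeff * g.natDegree := by
    simpa only [leadingCoeff_mul, leadingCoeff_derivative, mul_right_comm, mul_assoc] using
      congrArg leadingCoeff h
  exact_mod_cast mul_left_cancel₀
    (mul_ne_zero (leadingCoeff_ne_zero.2 hf) (leadingCoeff_ne_zero.2 hg)) hlead

theorem exists_eq_smul_of_derivative_mul_eq {K : Type*} [Field K] [CharZero K] {f g : K[X]}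
    (hg : g ≠ 0) (h : derivative f * g = f * derivative g) : ∃ c : K, f = c • g := by
  by_cases hf : f = 0
  · exact ⟨0, by rw [hf, zero_smul]⟩
  let c := f.leadingCoeff / g.leadingCoeff
  refine ⟨c, sub_eq_zero.1 (by_contra fun hsub => ?_)⟩
  have hdeg := natDegree_eq_of_derivative_mul_eq hf hg h
  have hdeg' : (f - c • g).natDegree = g.natDegree := by
    refine natDegree_eq_of_derivative_mul_eq hsub hg ?_
    rw [derivative_sub, derivative_smul, sub_mul, sub_mul, h, smul_mul_assoc, smul_mul_assoc,
      mul_comm g]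
  refine hsub (leadingCoeff_eq_zero.1 ?_)
  rw [leadingCoeff, hdeg', coeff_sub, coeff_smul, ← hdeg, coeff_natDegree, hdeg, coeff_natDegree,
    smul_eq_mul, div_mul_cancel₀ _ (leadingCoeff_ne_zero.2 hg), sub_self]

theorem not_linearIndependent_polynomial_pow_mul_pow [CommRing R] [Nontrivial R] (f g : R[X]) :
    ¬ LinearIndependent R fun p : ℕ × ℕ => f ^ p.1 * g ^ p.2 := by
  refine not_linearIndependent_pow_mul_pow_of_rank_le (V := degreeLT R)
    (d := f.natDegree + g.natDegree) (fun _ _ h => degreeLT_mono h) (fun N => ?_) fun i j => ?_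
  · rw [(degreeLTEquiv R N).rank_eq, rank_fin_fun]
  · rw [degreeLT_succ_eq_degreeLE, mem_degreeLE, ← natDegree_le_iff_degree_le]
    refine (natDegree_mul_le_of_le natDegree_pow_le natDegree_pow_le).trans ?_
    nlinarith

theorem IsOreExtension.not_linearIndependent_pow_mul_pow_of_derivative {K : Type*} [Field K]
    [CharZero K] [Ring S] [Algebra K S] {ι : K[X] →ₐ[K] S} {x : S}
    (h : IsOreExtension (ι : K[X] →+* S) (RingHom.id _) derivative x) {a b : S}
    (hab : Commute a b) :
    ¬ LinearIndependent K fun p : ℕ × ℕ => a ^ p.1 * b ^ p.2 := by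
  let _ : Differential K[X] := ⟨derivative'.restrictScalars ℤ⟩
  have hW := fun f g : K[X] => exists_eq_smul_of_derivative_mul_eq (f := f) (g := g)
  by_cases ha : a ∈ ι.range
  · by_cases hb : b ∈ ι.range
    · obtain ⟨f, rfl⟩ := ha
      obtain ⟨g, rfl⟩ := hb
      intro hli
      refine not_linearIndependent_polynomial_pow_mul_pow f g (.of_comp ι.toLinearMap ?_)
      simpa [Function.comp_def] using hli
    · exact h.not_linearIndependent_pow_mul_pow_of_notMem_range hW hb hab.symm (.refl b)
  · exact h.not_linearIndependent_pow_mul_pow_of_notMem_range hW ha (.refl a) hab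

end WeylAlgebra

namespace IsOreExtension

section Finite

variable {K : Type*} [CommRing K] [Ring S] {ι : K[X] →+* S} {σ : K[X] →+* K[X]} {δ : K[X] → K[X]}
  {x : S}

theorem mem_center_of_commute_X (h : IsOreExtension ι σ δ x) (hC : ∀ c, ι (C c) ∈ Set.center S)
    {z : S} (hX : Commute (ι X) z) (hx : Commute x z) : z ∈ Set.center S := by
  refine h.mem_center_of_commute (fun r => ?_) hx
  induction r using Polynomial.induction_on with
  | C c => exact (hC c).comm z
  | add p q hp hq => exact map_add ι p q ▸ hp.add_left hq
  | monomial n c _ =>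
    rw [map_mul, map_pow]
    exact Commute.mul_left ((hC c).comm z) (hX.pow_left (n + 1))

theorem adjoin_mul_adjoin_eq_top {Z : Type*} [CommRing Z] [Algebra Z S]
    (h : IsOreExtension ι σ δ x) (hC : ∀ c, ι (C c) ∈ (algebraMap Z S).range) :
    (Algebra.adjoin Z {ι X}).toSubmodule * (Algebra.adjoin Z {x}).toSubmodule = ⊤ := by
  have hι : ∀ r, ι r ∈ Algebra.adjoin Z {ι X} := fun r => by
    induction r using Polynomial.induction_on' with
    | add p q hp hq => exact map_add ι p q ▸ add_mem hp hq
    | monomial n c =>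
      obtain ⟨z, hz⟩ := hC c
      rw [← C_mul_X_pow_eq_monomial, map_mul, map_pow, ← hz]
      exact mul_mem (Subalgebra.algebraMap_mem _ z)
        (pow_mem (Algebra.self_mem_adjoin_singleton Z _) n)
  refine eq_top_iff.2 fun s _ => ?_
  obtain ⟨p, rfl⟩ := h.eval₂_bijective.surjective s
  rw [eval₂_eq_sum, Polynomial.sum]
  exact sum_mem fun i _ => Submodule.mul_mem_mul (hι _)
    (pow_mem (Algebra.self_mem_adjoin_singleton Z x) i)

theorem finite_of_isIntegral {Z : Type*} [CommRing Z] [Algebra Z S]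
    (h : IsOreExtension ι σ δ x) (hC : ∀ c, ι (C c) ∈ (algebraMap Z S).range)
    (hX : IsIntegral Z (ι X)) (hx : IsIntegral Z x) : Module.Finite Z S :=
  ⟨h.adjoin_mul_adjoin_eq_top hC ▸ hX.fg_adjoin_singleton.mul hx.fg_adjoin_singleton⟩

theorem finite_center (h : IsOreExtension ι σ δ x) (hC : ∀ c, ι (C c) ∈ Set.center S) {n : ℕ}
    (hn : 0 < n) (hX : Commute x (ι X ^ n)) (hx : Commute (x ^ n) (ι X)) :
    Module.Finite (Subring.center S) S := by
  have hXn : ι X ^ n ∈ Subring.center S :=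
    h.mem_center_of_commute_X hC ((Commute.refl _).pow_right n) hX
  have hxn : x ^ n ∈ Subring.center S :=
    h.mem_center_of_commute_X hC hx.symm ((Commute.refl _).pow_right n)
  exact h.finite_of_isIntegral (fun c => ⟨⟨_, hC c⟩, rfl⟩)
    (.of_pow hn (isIntegral_algebraMap (x := (⟨_, hXn⟩ : Subring.center S))))
    (.of_pow hn (isIntegral_algebraMap (x := (⟨_, hxn⟩ : Subring.center S))))

end Finite

theorem eq_derivative {K : Type*} [CommRing K] [Ring S] {ι : K[X] →+* S} {δ : K[X] → K[X]}
    {x : S} (h : IsOreExtension ι (RingHom.id _) δ x) (hδC : ∀ c, δ (C c) = 0) (hδX : δ X = 1) :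
    δ = derivative := by
  let δₗ : K[X] →ₗ[K] K[X] :=
    { toFun := δ
      map_add' := h.deriv_add
      map_smul' := fun c p => by
        simp only [smul_eq_C_mul, h.deriv_mul, hδC, zero_mul, add_zero, RingHom.id_apply] }
  let D : Derivation K K[X] K[X] := .mk' δₗ fun p q =>
    (h.deriv_mul p q).trans (by rw [mul_comm (δ p)]; rfl)
  have hD : D = derivative' := derivation_ext (hδX.trans derivative_X.symm)
  exact congrArg DFunLike.coe hD

end IsOreExtension

end

open Polynomial in
/-- **Hellström–Silvestrov, Theorem 7.5.** Let `𝕜` be a field, `R = 𝕜[y]`,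
`σ` the endomorphism of `R` fixing `𝕜` with `σ(y) = q y`, and `δ` the `σ`-derivation
vanishing on `𝕜` with `δ(y) = 1`, where `q ∈ 𝕜` is a root of unity. Let
`S = R[x; σ, δ]` and `C` the center of `S`. If `a` and `b` are commuting elements of
`S`, then there is a nonzero polynomial `f(s,t)` with coefficients in `C` such that
`f(a,b) = 0`. -/
theorem hellstrom_silvestrov_annihilating {K : Type*} [Field K] [Ring S]
    (q : K) (k : ℕ) (hk : 0 < k) (hq : q ^ k = 1)
    (σ : K[X] →+* K[X]) (hσC : ∀ a : K, σ (C a) = C a) (hσX : σ X = C q * X)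
    (δ : K[X] → K[X]) (hδC : ∀ a : K, δ (C a) = 0) (hδX : δ X = 1)
    (ι : K[X] →+* S) (x : S) (h : IsOreExtension ι σ δ x)
    (a b : S) (hab : a * b = b * a) :
    ∃ c : ℕ × ℕ →₀ S, c ≠ 0 ∧ (∀ p, c p ∈ Set.center S) ∧
      (c.sum fun q z => z * a ^ q.1 * b ^ q.2) = 0 := by
  have hC : ∀ c, ι (C c) ∈ Set.center S := fun c => h.map_mem_center (hσC c) (hδC c)
  let _ : Algebra K S := (ι.comp C).toAlgebra' fun c => (hC c).comm
  have : Nontrivial S := h.nontrivial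
  rcases exists_geom_sum_eq_zero_or_eq_one hk hq with ⟨n, hn, hqn, hsum⟩ | ⟨rfl, _⟩
  · have hxX : x * ι X = q • (ι X * x) + 1 := by
      rw [h.comm_rule, hσX, hδX, map_mul, map_one, mul_assoc]
      rfl
    have := h.finite_center hC hn (commute_pow_right_of_geom_sum_eq_zero hxX hqn hsum)
      (commute_pow_of_geom_sum_eq_zero hxX hqn hsum)
    exact exists_center_relation_of_not_linearIndependent
      (not_linearIndependent_pow_mul_pow_of_finite (Z := Subring.center S) a b)
  · obtain rfl : σ = RingHom.id K[X] := Polynomial.ringHom_ext hσC (by simpa using hσX)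
    obtain rfl := h.eq_derivative hδC hδX
    let ι' : K[X] →ₐ[K] S := { ι with commutes' := fun _ => rfl }
    exact exists_center_relation_of_not_linearIndependent
      (IsOreExtension.not_linearIndependent_pow_mul_pow_of_derivative (ι := ι') h hab)
end
end
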